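/- arXiv:2105.06712 — 2 statements merged into one kernel-verified Lean document; each statement's English description precedes it below -/
import Mathlib

section
/- Let h and k be natural numbers with k ≥ 1, and let S be a finite set of binary strings (lists of Booleans), each of length exactly h, with |S| = k. Then the set of all prefixes (initial segments, of any length from 0 to h) of strings in S has cardinality at most 2·k + k·(h − ⌊log₂ k⌋). (The strings of S encode the k updated leaf positions in the complete binary recursion tree of the parallel divide-and-conquer sum on n = 2^h inputs; the prefix set is exactly the set of recursion-tree nodes containing an affected read, so a batch update of size k induces O(k·log(1 + n/k)) affected reads and computation distance.) -/
/-- The set of all prefixes (initial segments) of strings in a finite set `S`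
of binary strings (lists of Booleans). -/
def prefixSet (S : Finset (List Bool)) : Finset (List Bool) :=
  S.biUnion (fun l => l.inits.toFinset)

/-!
Arrange the prefixes in levels by length. Over an alphabet with `b` letters, level `j` contains
at most `b ^ j` strings, and it contains at most `k` of them because each is the truncation to
length `j` of one of the `k` given strings. The two bounds cross near `m = ⌊log_b k⌋`: the levels
below `m` form a geometric sum of at most `k`, and each of the at most `h - m + 1` remaining levels
contributes at most `k`.
-/

section

open Finset

variable {α : Type*}

section Prefixes

variable [DecidableEq α] {S : Finset (List α)} {h : ℕ}

/-- The set of all prefixes of the words in `S`, as `prefixSet` but over an arbitrary alphabet. -/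
def wordPrefixes (S : Finset (List α)) : Finset (List α) :=
  S.biUnion fun l => l.inits.toFinset

lemma mem_wordPrefixes {p : List α} : p ∈ wordPrefixes S ↔ ∃ l ∈ S, p <+: l := by
  simp [wordPrefixes]

lemma length_le_of_mem_wordPrefixes (hlen : ∀ l ∈ S, l.length ≤ h) {p : List α}
    (hp : p ∈ wordPrefixes S) : p.length ≤ h := by
  obtain ⟨l, hl, hpl⟩ := mem_wordPrefixes.1 hp
  exact hpl.length_le.trans (hlen l hl)

lemma card_wordPrefixes_filter_length_le (S : Finset (List α)) (j : ℕ) :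
    #{p ∈ wordPrefixes S | p.length = j} ≤ #S := by
  have hsub : {p ∈ wordPrefixes S | p.length = j} ⊆ S.image (List.take j) := by
    intro p hp
    obtain ⟨hpS, rfl⟩ := mem_filter.1 hp
    obtain ⟨l, hl, hpl⟩ := mem_wordPrefixes.1 hpS
    exact mem_image.2 ⟨l, hl, (List.prefix_iff_eq_take.1 hpl).symm⟩
  exact (card_le_card hsub).trans card_image_le

lemma card_wordPrefixes_le_sum_min [Fintype α] (hlen : ∀ l ∈ S, l.length ≤ h) :
    #(wordPrefixes S) ≤ ∑ j ∈ range (h + 1), min (Fintype.card α ^ j) #S := by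
  have hlevel : ∀ p ∈ wordPrefixes S, p.length ∈ range (h + 1) := fun p hp =>
    mem_range_succ_iff.2 (length_le_of_mem_wordPrefixes hlen hp)
  rw [card_eq_sum_card_fiberwise hlevel]
  exact sum_le_sum fun j _ =>
    le_min card_filter_length_eq_le (card_wordPrefixes_filter_length_le S j)

end Prefixes

lemma sum_pow_range_log_le {b : ℕ} (hb : 2 ≤ b) (k : ℕ) :
    ∑ j ∈ range (Nat.log b k), b ^ j ≤ k := by
  obtain rfl | hk := eq_or_ne k 0
  · simp
  · exact (Nat.geomSum_lt hb fun _ => mem_range.1).le.trans (Nat.pow_log_le_self b hk)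

lemma sum_min_pow_le {b : ℕ} (hb : 2 ≤ b) (h k : ℕ) :
    ∑ j ∈ range (h + 1), min (b ^ j) k ≤ 2 * k + k * (h - Nat.log b k) := by
  set m := Nat.log b k
  calc ∑ j ∈ range (h + 1), min (b ^ j) k
      ≤ ∑ j ∈ range (m + (h - m + 1)), min (b ^ j) k :=
        sum_le_sum_of_subset (range_mono (by lia))
    _ = ∑ j ∈ range m, min (b ^ j) k + ∑ j ∈ range (h - m + 1), min (b ^ (m + j)) k :=
        sum_range_add _ _ _
    _ ≤ ∑ j ∈ range m, b ^ j + ∑ _j ∈ range (h - m + 1), k :=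
        add_le_add (sum_le_sum fun _ _ => min_le_left _ _) (sum_le_sum fun _ _ => min_le_right _ _)
    _ ≤ k + (h - m + 1) * k := by
        rw [sum_const, card_range, smul_eq_mul]
        gcongr
        exact sum_pow_range_log_le hb k
    _ = 2 * k + k * (h - m) := by ring

theorem prefixSet_card_le_general [Fintype α] [DecidableEq α] [Nontrivial α] {h : ℕ}
    {S : Finset (List α)} (hlen : ∀ l ∈ S, l.length ≤ h) :
    #(wordPrefixes S) ≤ 2 * #S + #S * (h - Nat.log (Fintype.card α) #S) :=
  (card_wordPrefixes_le_sum_min hlen).trans (sum_min_pow_le Fintype.one_lt_card h #S)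

end

theorem prefixSet_card_le (h k : ℕ) (hk : 1 ≤ k) (S : Finset (List Bool))
    (hlen : ∀ l ∈ S, l.length = h) (hcard : S.card = k) :
    (prefixSet S).card ≤ 2 * k + k * (h - Nat.log 2 k) := by
  subst hcard
  exact prefixSet_card_le_general fun l hl => (hlen l hl).le
end

section
/- Let h and k be natural numbers with k ≥ 1 and k ≤ 2^h, and let S be a finite set of binary strings (lists of Booleans), each of length exactly h, with |S| = k. Then the cardinality of the set of all prefixes of strings in S is at most 4·k·log₂(1 + 2^h/k), where the cardinality, k, and 2^h are regarded as real numbers. (With n = 2^h, this is the bound: a batch update changing k of the n input modifiables of the parallel divide-and-conquer sum induces O(k·log(1 + n/k)) affected reads and computation distance.) -/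
/-!
The `k` strings have at most `min (2 ^ i) k` prefixes of length `i`. Using `2 ^ i` up to
`m = ⌊log₂ k⌋` and `k` beyond it gives at most `2 ^ (m + 1) + (h - m) * k` prefixes.
In terms of `v = 2 ^ m / k ∈ [1/2, 1]` and `x = 2 ^ h / k` this is
`k * (2 * v - log₂ v + log₂ x)`. Concavity of `log₂` on `[1/2, 1]` gives `2 * v - log₂ v ≤ 2`, and
`4 * x ≤ (1 + x) ^ 2` gives `2 + log₂ x ≤ 2 * log₂ (1 + x)`. If `k ≥ 2 ^ h`, count all
the fewer than `2 ^ (h + 1)` strings of length at most `h` and use `x ≤ log₂ (1 + x)` on `[0, 1]`.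
-/

open Finset

section Counting

variable {S : Finset (List Bool)} {l : List Bool} {h m : ℕ}

theorem mem_prefixSet : l ∈ prefixSet S ↔ ∃ s ∈ S, l <+: s := by
  simp [prefixSet]

theorem length_le_of_mem_prefixSet (hS : ∀ s ∈ S, s.length ≤ h) (hl : l ∈ prefixSet S) :
    l.length ≤ h := by
  obtain ⟨s, hs, hls⟩ := mem_prefixSet.1 hl
  exact hls.length_le.trans (hS s hs)

theorem card_filter_length_prefixSet_le_card (S : Finset (List Bool)) (i : ℕ) :
    #{l ∈ prefixSet S | l.length = i} ≤ #S := by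
  have hsub : {l ∈ prefixSet S | l.length = i} ⊆ S.image (List.take i) := by
    intro l hl
    obtain ⟨hmem, rfl⟩ := mem_filter.1 hl
    obtain ⟨s, hs, hls⟩ := mem_prefixSet.1 hmem
    exact mem_image.2 ⟨s, hs, (List.prefix_iff_eq_take.1 hls).symm⟩
  exact (card_le_card hsub).trans card_image_le

theorem card_prefixSet_eq_sum_card_filter_length (hS : ∀ s ∈ S, s.length ≤ h) :
    #(prefixSet S) = ∑ i ∈ range (h + 1), #{l ∈ prefixSet S | l.length = i} :=
  card_eq_sum_card_fiberwise fun _ hl =>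
    mem_coe.2 <| mem_range_succ_iff.2 <| length_le_of_mem_prefixSet hS hl

theorem card_prefixSet_le_two_pow_add_mul (hS : ∀ s ∈ S, s.length ≤ h) (hm : m ≤ h) :
    #(prefixSet S) ≤ 2 ^ (m + 1) + (h - m) * #S := by
  have hsplit : h + 1 = (m + 1) + (h - m) := by omega
  rw [card_prefixSet_eq_sum_card_filter_length hS, hsplit, sum_range_add]
  gcongr
  · calc ∑ i ∈ range (m + 1), #{l ∈ prefixSet S | l.length = i}
        ≤ ∑ i ∈ range (m + 1), 2 ^ i :=
          sum_le_sum fun i _ => by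
            simpa only [Fintype.card_bool] using
              card_filter_length_eq_le (T := prefixSet S) (s := i)
      _ ≤ 2 ^ (m + 1) := (Nat.geomSum_lt le_rfl fun _ => mem_range.1).le
  · calc ∑ i ∈ range (h - m), #{l ∈ prefixSet S | l.length = m + 1 + i}
        ≤ #(range (h - m)) • #S :=
          sum_le_card_nsmul _ _ _ fun i _ => card_filter_length_prefixSet_le_card S (m + 1 + i)
      _ = (h - m) * #S := by rw [card_range, smul_eq_mul]

end Counting

section Logarithm

variable {k x : ℝ} {h m : ℕ}

theorem le_logb_two_one_add (hx₀ : 0 ≤ x) (hx₁ : x ≤ 1) : x ≤ Real.logb 2 (1 + x) := by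
  rw [Real.le_logb_iff_rpow_le one_lt_two (by linarith)]
  have bernoulli : (1 + 1 : ℝ) ^ x ≤ 1 + x * 1 :=
    rpow_one_add_le_one_add_mul_self (by norm_num) hx₀ hx₁
  rwa [one_add_one_eq_two, mul_one] at bernoulli

theorem two_add_logb_two_le (hx : 0 < x) : 2 + Real.logb 2 x ≤ 2 * Real.logb 2 (1 + x) := by
  calc 2 + Real.logb 2 x = Real.logb 2 (2 ^ 2 * x) := by
        rw [Real.logb_mul (by norm_num) hx.ne', Real.logb_pow, Real.logb_self_eq_one one_lt_two]
        norm_num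
    _ ≤ Real.logb 2 ((1 + x) ^ 2) := by
        gcongr
        · exact one_lt_two
        · nlinarith [sq_nonneg (1 - x)]
    _ = 2 * Real.logb 2 (1 + x) := by rw [Real.logb_pow]; norm_num

theorem two_mul_le_two_add_logb_two (hx₀ : 1 / 2 ≤ x) (hx₁ : x ≤ 1) :
    2 * x ≤ 2 + Real.logb 2 x := by
  have hlog : 2 * x - 1 ≤ Real.logb 2 (1 + (2 * x - 1)) :=
    le_logb_two_one_add (by linarith) (by linarith)
  rw [add_sub_cancel, Real.logb_mul two_ne_zero (by linarith),
    Real.logb_self_eq_one one_lt_two] at hlog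
  linarith

theorem two_pow_succ_add_mul_le_mul_logb (hk : 2 ^ m ≤ k) (hk' : k ≤ 2 ^ (m + 1)) :
    2 ^ (m + 1) + ((h : ℝ) - m) * k ≤ 2 * k * Real.logb 2 (1 + 2 ^ h / k) := by
  have hk₀ : 0 < k := lt_of_lt_of_le (by positivity) hk
  have hlog (n : ℕ) : Real.logb 2 (2 ^ n / k) = n - Real.logb 2 k := by
    rw [Real.logb_div (by positivity) hk₀.ne', Real.logb_pow, Real.logb_self_eq_one one_lt_two,
      mul_one]
  have hratio : 2 * (2 ^ m / k) ≤ 2 + Real.logb 2 (2 ^ m / k) := by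
    refine two_mul_le_two_add_logb_two ?_ ((div_le_one hk₀).2 hk)
    rw [div_le_div_iff₀ two_pos hk₀]
    linarith [pow_succ (2 : ℝ) m]
  have hamgm : 2 + Real.logb 2 (2 ^ h / k) ≤ 2 * Real.logb 2 (1 + 2 ^ h / k) :=
    two_add_logb_two_le (by positivity)
  calc 2 ^ (m + 1) + ((h : ℝ) - m) * k = k * (2 * (2 ^ m / k) + (h - m)) := by
        field_simp
        ring
    _ ≤ k * (2 * Real.logb 2 (1 + 2 ^ h / k)) := by
        gcongr
        linarith [hlog m, hlog h]
    _ = 2 * k * Real.logb 2 (1 + 2 ^ h / k) := by ring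

end Logarithm

theorem prefixSet_card_le_real_general {h : ℕ} {S : Finset (List Bool)} (hS : S.Nonempty)
    (hlen : ∀ l ∈ S, l.length ≤ h) :
    (#(prefixSet S) : ℝ) ≤ 2 * #S * Real.logb 2 (1 + 2 ^ h / #S) := by
  have hk₀ : (0 : ℝ) < #S := by exact_mod_cast hS.card_pos
  rcases le_total (2 ^ h) #S with hk | hk
  · have hx : (2 : ℝ) ^ h / #S ≤ 1 := (div_le_one hk₀).2 (by exact_mod_cast hk)
    calc (#(prefixSet S) : ℝ) ≤ 2 ^ (h + 1) := by
          exact_mod_cast (card_prefixSet_le_two_pow_add_mul hlen le_rfl).trans_eq (by simp)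
      _ = 2 * #S * (2 ^ h / #S) := by field_simp; ring
      _ ≤ 2 * #S * Real.logb 2 (1 + 2 ^ h / #S) := by
          gcongr
          exact le_logb_two_one_add (by positivity) hx
  · have hlow : 2 ^ Nat.log 2 #S ≤ #S := Nat.pow_log_le_self 2 hS.card_ne_zero
    have hupp : #S ≤ 2 ^ (Nat.log 2 #S + 1) := (Nat.lt_pow_succ_log_self one_lt_two _).le
    have hm : Nat.log 2 #S ≤ h := (Nat.pow_le_pow_iff_right one_lt_two).1 (hlow.trans hk)
    calc (#(prefixSet S) : ℝ) ≤ 2 ^ (Nat.log 2 #S + 1) + ((h : ℝ) - Nat.log 2 #S) * #S := by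
          rw [← Nat.cast_sub hm]
          exact_mod_cast card_prefixSet_le_two_pow_add_mul hlen hm
      _ ≤ 2 * #S * Real.logb 2 (1 + 2 ^ h / #S) :=
          two_pow_succ_add_mul_le_mul_logb (by exact_mod_cast hlow) (by exact_mod_cast hupp)

theorem prefixSet_card_le_real (h k : ℕ) (hk : 1 ≤ k) (hk2 : k ≤ 2 ^ h)
    (S : Finset (List Bool)) (hlen : ∀ l ∈ S, l.length = h) (hcard : S.card = k) :
    ((prefixSet S).card : ℝ) ≤ 4 * (k : ℝ) * Real.logb 2 (1 + (2 : ℝ) ^ h / (k : ℝ)) := by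
  subst hcard
  have hlog : 0 ≤ Real.logb 2 (1 + (2 : ℝ) ^ h / #S) :=
    Real.logb_nonneg one_lt_two (le_add_of_nonneg_right (by positivity))
  refine (prefixSet_card_le_real_general (card_pos.1 hk) fun l hl => (hlen l hl).le).trans ?_
  gcongr
  norm_num
end
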